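/- Let (A, C, ψ) be a right-right entwining structure over a commutative ring k, g ∈ C grouplike, and B = A^{co C} = {b ∈ A : ψ(g ⊗ b) = b ⊗ g}. Then (A, C, ψ, g) is cleft if and only if both of the following hold: (i) the map *can sending f ∈ Hom_k(C, A) to the endomorphism a ↦ Σ a_ψ f(g^ψ) of A is a bijection from Hom_k(C, A) onto the set of left B-linear endomorphisms of A; and (ii) (A, C, ψ, g) satisfies the right normal basis property, i.e. there exists a bijection B ⊗_k C → A that is left B-linear (B acting on the first factor of B ⊗_k C and by left multiplication on A) and right C-colinear (B ⊗_k C carrying the coaction id_B ⊗ Δ and A the coaction a ↦ ψ(g ⊗ a)). -/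

import Mathlib

/-!
Convolution along the coaction `a ↦ ψ(g ⊗ a)` makes `Hom(A, A)` a right module over the convolution
algebra `Hom(C, A)`, and `*can f = id ⋆ f`. A normal basis amounts to a colinear `m : C → A`
together with a left `B`-linear `p : A → B` such that `p ∘ m = ε` and `p ⋆ m = id`, the inverse of
`b ⊗ c ↦ b m(c)` being `a ↦ p(a₀) ⊗ a₁`.

A cleaving map `l` with inverse `m` gives such a pair with `p = *can l`. Then `*can f ∘ m = m ⋆ f`
shows that `*can` is injective, and a left `B`-linear `φ` is `φ ∘ (p ⋆ m) = p ⋆ (φ ∘ m)`, which is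
`*can (l ⋆ (φ ∘ m))`. Conversely, given a normal basis, surjectivity of `*can` yields `l` with
`p = *can l`. Since `*can (l ⋆ m) = p ⋆ m = id = *can ε`, injectivity gives `l ⋆ m = ε`, while
`m ⋆ l = p ∘ m = ε`; finally `l ∈ Q` because `p` has values in `B`.
-/

open TensorProduct CoalgebraStruct

universe u

section Entwining

variable (k A C : Type u) [CommRing k] [Ring A] [Algebra k A]
  [AddCommGroup C] [Module k C] [Coalgebra k C]

/-- The map `A ⊗ C → A ⊗ C`, `a ⊗ c ↦ Σ a · b_ψ ⊗ c^ψ` (entwine with `b` and multiply). -/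
noncomputable def entwineRight (ψ : C ⊗[k] A →ₗ[k] A ⊗[k] C) (b : A) :
    A ⊗[k] C →ₗ[k] A ⊗[k] C :=
  LinearMap.rTensor C (LinearMap.mul' k A) ∘ₗ
    (TensorProduct.assoc k A A C).symm.toLinearMap ∘ₗ
    LinearMap.lTensor A (ψ ∘ₗ (TensorProduct.mk k C A).flip b)

/-- The map `(C ⊗ C) ⊗ A → A ⊗ (C ⊗ C)`,
`c ⊗ c' ⊗ a ↦ Σ a_{ψΨ} ⊗ c^Ψ ⊗ c'^ψ`. -/
noncomputable def entwineTwice (ψ : C ⊗[k] A →ₗ[k] A ⊗[k] C) :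
    (C ⊗[k] C) ⊗[k] A →ₗ[k] A ⊗[k] (C ⊗[k] C) :=
  (TensorProduct.assoc k A C C).toLinearMap ∘ₗ
    LinearMap.rTensor C ψ ∘ₗ
    (TensorProduct.assoc k C A C).symm.toLinearMap ∘ₗ
    LinearMap.lTensor C ψ ∘ₗ
    (TensorProduct.assoc k C C A).toLinearMap

/-- `(A, C, ψ)` is a right-right entwining structure. -/
noncomputable def IsEntwining (ψ : C ⊗[k] A →ₗ[k] A ⊗[k] C) : Prop :=
  (∀ (c : C) (a b : A), ψ (c ⊗ₜ[k] (a * b)) = entwineRight k A C ψ b (ψ (c ⊗ₜ[k] a))) ∧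
  (∀ c : C, ψ (c ⊗ₜ[k] (1 : A)) = (1 : A) ⊗ₜ[k] c) ∧
  (∀ (c : C) (a : A),
      LinearMap.lTensor A (comul (R := k)) (ψ (c ⊗ₜ[k] a)) =
        entwineTwice k A C ψ ((comul c) ⊗ₜ[k] a)) ∧
  (∀ (c : C) (a : A),
      TensorProduct.rid k A (LinearMap.lTensor A (counit (R := k)) (ψ (c ⊗ₜ[k] a))) =
        (counit (R := k) c) • a)

/-- `g ∈ C` is a grouplike element. -/
def IsGrouplikeElem (g : C) : Prop := comul g = g ⊗ₜ[k] g ∧ counit (R := k) g = 1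

/-- Membership in `Q`: `ψ(c_1 ⊗ q(c_2)) = q(c) ⊗ g` for all `c`. -/
def MemQ (ψ : C ⊗[k] A →ₗ[k] A ⊗[k] C) (g : C) (q : C →ₗ[k] A) : Prop :=
  ∀ c : C, ψ (LinearMap.lTensor C q (comul c)) = q c ⊗ₜ[k] g

/-- The convolution product on `Hom_k(C, A)`. -/
noncomputable def conv (f h : C →ₗ[k] A) : C →ₗ[k] A :=
  LinearMap.mul' k A ∘ₗ TensorProduct.map f h ∘ₗ comul

/-- The unit of the convolution algebra: `c ↦ ε(c) 1`. -/
noncomputable def convUnit : C →ₗ[k] A :=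
  Algebra.linearMap k A ∘ₗ counit

end Entwining

section Cleft

variable (k A C : Type u) [CommRing k] [Ring A] [Algebra k A]
  [AddCommGroup C] [Module k C] [Coalgebra k C]

noncomputable def coinvAlgebra (ψ : C ⊗[k] A →ₗ[k] A ⊗[k] C) (hψ : IsEntwining k A C ψ)
    (g : C) : Subalgebra k A where
  carrier := {b : A | ψ (g ⊗ₜ[k] b) = b ⊗ₜ[k] g}
  mul_mem' := by
    intro a b (ha : ψ (g ⊗ₜ[k] a) = a ⊗ₜ[k] g) (hb : ψ (g ⊗ₜ[k] b) = b ⊗ₜ[k] g)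
    show ψ (g ⊗ₜ[k] (a * b)) = (a * b) ⊗ₜ[k] g
    rw [hψ.1 g a b, ha, entwineRight]
    simp only [LinearMap.coe_comp, LinearEquiv.coe_coe, Function.comp_apply,
      LinearMap.lTensor_tmul, LinearMap.comp_apply, TensorProduct.mk_apply,
      LinearMap.flip_apply, hb, TensorProduct.assoc_symm_tmul,
      LinearMap.rTensor_tmul, LinearMap.mul'_apply]
  one_mem' := hψ.2.1 g
  add_mem' := by
    intro a b (ha : ψ (g ⊗ₜ[k] a) = a ⊗ₜ[k] g) (hb : ψ (g ⊗ₜ[k] b) = b ⊗ₜ[k] g)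
    show ψ (g ⊗ₜ[k] (a + b)) = (a + b) ⊗ₜ[k] g
    rw [tmul_add, map_add, ha, hb, add_tmul]
  algebraMap_mem' := by
    intro r
    show ψ (g ⊗ₜ[k] algebraMap k A r) = algebraMap k A r ⊗ₜ[k] g
    rw [Algebra.algebraMap_eq_smul_one, tmul_smul, map_smul, hψ.2.1, smul_tmul']

end Cleft

section Cleft2

variable (k A C : Type u) [CommRing k] [Ring A] [Algebra k A]
  [AddCommGroup C] [Module k C] [Coalgebra k C]

/-- The map `*can : Hom_k(C, A) → End(A)`, `f ↦ (a ↦ Σ a_ψ f(g^ψ))`. -/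
noncomputable def canStar (ψ : C ⊗[k] A →ₗ[k] A ⊗[k] C) (g : C) (f : C →ₗ[k] A) :
    A →ₗ[k] A :=
  LinearMap.mul' k A ∘ₗ LinearMap.lTensor A f ∘ₗ ψ ∘ₗ TensorProduct.mk k C A g

section ComoduleConvolution

variable {R S D X M : Type*} [CommSemiring R] [Semiring S] [Algebra R S]
  [AddCommMonoid D] [Module R D] [AddCommMonoid X] [Module R X]
  [AddCommMonoid M] [Module R M] [Module S M] [IsScalarTower R S M]

variable (R S M) in
/-- The action `S ⊗ M → M` of an `R`-algebra on a module, as an `R`-linear map. -/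
noncomputable def smulTensor : S ⊗[R] M →ₗ[R] M :=
  TensorProduct.lift (Algebra.lsmul R R M : S →ₐ[R] Module.End R M).toLinearMap

@[simp]
theorem smulTensor_tmul (s : S) (m : M) : smulTensor R S M (s ⊗ₜ m) = s • m := rfl

theorem smulTensor_tensorProduct :
    smulTensor R S (S ⊗[R] D) =
      (LinearMap.mul' R S).rTensor D ∘ₗ (TensorProduct.assoc R S S D).symm.toLinearMap := by
  ext s s' d
  simp [TensorProduct.smul_tmul']

/-- The convolution `x ↦ p(x₀) • h(x₁)` along a coaction `ρ : X → X ⊗ D`. For `ρ = comul` this is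
the convolution product; in general it is the right action of `Hom(D, S)` on `Hom(X, S)`, with
values allowed in an `S`-module. -/
noncomputable def comoduleConv (ρ : X →ₗ[R] X ⊗[R] D) (p : X →ₗ[R] S) (h : D →ₗ[R] M) :
    X →ₗ[R] M :=
  smulTensor R S M ∘ₗ TensorProduct.map p h ∘ₗ ρ

end ComoduleConvolution

local notation:70 p:71 "⋆[" ρ "]" h:70 => comoduleConv ρ p h

section ComoduleConvolution

variable {R S D X Y M N : Type*} [CommSemiring R] [Semiring S] [Algebra R S]
  [AddCommMonoid D] [Module R D] [AddCommMonoid X] [Module R X] [AddCommMonoid Y] [Module R Y]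
  [AddCommMonoid M] [Module R M] [Module S M] [IsScalarTower R S M]
  [AddCommMonoid N] [Module R N] [Module S N] [IsScalarTower R S N]

theorem comoduleConv_comp {ρ : X →ₗ[R] X ⊗[R] D} {σ : Y →ₗ[R] Y ⊗[R] D} {μ : Y →ₗ[R] X}
    (hμ : ρ ∘ₗ μ = μ.rTensor D ∘ₗ σ) (p : X →ₗ[R] S) (h : D →ₗ[R] M) :
    (p ⋆[ρ] h) ∘ₗ μ = (p ∘ₗ μ) ⋆[σ] h := by
  rw [comoduleConv, comoduleConv, LinearMap.comp_assoc, LinearMap.comp_assoc, hμ,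
    ← LinearMap.comp_assoc _ _ (TensorProduct.map p h), LinearMap.map_comp_rTensor]

theorem comp_comoduleConv (ρ : X →ₗ[R] X ⊗[R] D) {p : X →ₗ[R] S} {φ : M →ₗ[R] N}
    (hφ : ∀ x m, φ (p x • m) = p x • φ m) (h : D →ₗ[R] M) :
    φ ∘ₗ (p ⋆[ρ] h) = p ⋆[ρ] (φ ∘ₗ h) := by
  have hmap : φ ∘ₗ smulTensor R S M ∘ₗ TensorProduct.map p h =
      smulTensor R S N ∘ₗ TensorProduct.map p (φ ∘ₗ h) := by
    ext x d
    simp [hφ]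
  simpa only [comoduleConv, LinearMap.comp_assoc] using congrArg (· ∘ₗ ρ) hmap

theorem comoduleConv_smul [Module S X] [IsScalarTower R S X] {ρ : X →ₗ[R] X ⊗[R] D}
    {p : X →ₗ[R] S} {s : S} (hρ : ∀ x, ρ (s • x) = s • ρ x) (hp : ∀ x, p (s • x) = s * p x)
    (h : D →ₗ[R] M) (x : X) : (p ⋆[ρ] h) (s • x) = s • (p ⋆[ρ] h) x := by
  simp only [comoduleConv, LinearMap.comp_apply, hρ]
  induction ρ x with
  | zero => simp
  | add t t' ht ht' => simp only [smul_add, map_add, ht, ht']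
  | tmul y d => simp [TensorProduct.smul_tmul', hp, mul_smul]

theorem comoduleConv_mk_one (ρ : X →ₗ[R] X ⊗[R] D) (p : X →ₗ[R] S) :
    p ⋆[ρ] (TensorProduct.mk R S D 1) = p.rTensor D ∘ₗ ρ := by
  have hmap : smulTensor R S (S ⊗[R] D) ∘ₗ TensorProduct.map p (TensorProduct.mk R S D 1) =
      p.rTensor D := by
    ext x d
    simp [TensorProduct.smul_tmul']
  rw [comoduleConv, ← LinearMap.comp_assoc, hmap]

theorem comoduleConv_flip_mk (ρ : X →ₗ[R] X ⊗[R] D) (p : X →ₗ[R] S) (d : D) (f : D →ₗ[R] S) :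
    p ⋆[ρ] ((TensorProduct.mk R S D).flip d ∘ₗ f) =
      (TensorProduct.mk R S D).flip d ∘ₗ (p ⋆[ρ] f) :=
  (comp_comoduleConv ρ (fun _ _ ↦ rfl) f).symm

variable [Coalgebra R D]

theorem comoduleConv_assoc {ρ : X →ₗ[R] X ⊗[R] D}
    (hρ : (TensorProduct.assoc R X D D).toLinearMap ∘ₗ ρ.rTensor D ∘ₗ ρ = comul.lTensor X ∘ₗ ρ)
    (p : X →ₗ[R] S) (f : D →ₗ[R] S) (h : D →ₗ[R] M) :
    (p ⋆[ρ] f) ⋆[ρ] h = p ⋆[ρ] (f ⋆[comul] h) := by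
  have hsmul : smulTensor R S M ∘ₗ TensorProduct.map (smulTensor R S S ∘ₗ TensorProduct.map p f) h =
      smulTensor R S M ∘ₗ TensorProduct.map p (smulTensor R S M ∘ₗ TensorProduct.map f h) ∘ₗ
        (TensorProduct.assoc R X D D).toLinearMap := by
    ext x d d'
    simp [mul_smul]
  calc (p ⋆[ρ] f) ⋆[ρ] h
      = (smulTensor R S M ∘ₗ
          TensorProduct.map (smulTensor R S S ∘ₗ TensorProduct.map p f) h) ∘ₗ
          ρ.rTensor D ∘ₗ ρ := by
        simp only [comoduleConv, ← LinearMap.comp_assoc, ← LinearMap.map_comp_rTensor]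
    _ = (smulTensor R S M ∘ₗ
          TensorProduct.map p (smulTensor R S M ∘ₗ TensorProduct.map f h)) ∘ₗ
          comul.lTensor X ∘ₗ ρ := by
        rw [hsmul, ← hρ]; rfl
    _ = p ⋆[ρ] (f ⋆[comul] h) := by
        simp only [comoduleConv, ← LinearMap.comp_assoc, ← LinearMap.map_comp_lTensor]

theorem comul_comoduleConv_assoc (p f : D →ₗ[R] S) (h : D →ₗ[R] M) :
    (p ⋆[comul] f) ⋆[comul] h = p ⋆[comul] (f ⋆[comul] h) :=
  comoduleConv_assoc Coalgebra.coassoc p f h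

theorem unit_comoduleConv (h : D →ₗ[R] M) :
    (Algebra.linearMap R S ∘ₗ counit (A := D)) ⋆[comul] h = h := by
  have hmap : smulTensor R S M ∘ₗ TensorProduct.map (Algebra.linearMap R S ∘ₗ counit (A := D)) h =
      h ∘ₗ (TensorProduct.lid R D).toLinearMap ∘ₗ counit.rTensor D := by
    ext c d
    simp
  ext d
  simpa [comoduleConv] using LinearMap.congr_fun hmap (comul d)

theorem comoduleConv_unit {ρ : X →ₗ[R] X ⊗[R] D}
    (hρ : (TensorProduct.rid R X).toLinearMap ∘ₗ counit.lTensor X ∘ₗ ρ = LinearMap.id)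
    (p : X →ₗ[R] S) : p ⋆[ρ] (Algebra.linearMap R S ∘ₗ counit) = p := by
  have hmap : smulTensor R S S ∘ₗ TensorProduct.map p (Algebra.linearMap R S ∘ₗ counit (A := D)) =
      p ∘ₗ (TensorProduct.rid R X).toLinearMap ∘ₗ counit.lTensor X := by
    ext x d
    simp [Algebra.algebraMap_eq_smul_one]
  ext x
  exact (LinearMap.congr_fun hmap (ρ x)).trans (congrArg p (LinearMap.congr_fun hρ x))

theorem comoduleConv_injective {l m : D →ₗ[R] S}
    (hlm : comoduleConv comul l m = Algebra.linearMap R S ∘ₗ counit) :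
    Function.Injective (comoduleConv comul m : (D →ₗ[R] M) → (D →ₗ[R] M)) := by
  have hleft : Function.LeftInverse (comoduleConv comul l : (D →ₗ[R] M) → (D →ₗ[R] M))
      (comoduleConv comul m) := fun h ↦ by
    rw [← comul_comoduleConv_assoc, hlm, unit_comoduleConv]
  exact hleft.injective

end ComoduleConvolution

section CoringRightAct

variable {R S D : Type*} [CommSemiring R] [Semiring S] [Algebra R S] [AddCommMonoid D] [Module R D]

/-- The right `S`-action `(s ⊗ d) ⊗ s' ↦ s ψ(d ⊗ s')` on `S ⊗ D` determined by `ψ`; for an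
entwining map it makes `S ⊗ D` an `S`-coring. -/
noncomputable def coringRightAct (ψ : D ⊗[R] S →ₗ[R] S ⊗[R] D) :
    (S ⊗[R] D) ⊗[R] S →ₗ[R] S ⊗[R] D :=
  smulTensor R S (S ⊗[R] D) ∘ₗ ψ.lTensor S ∘ₗ (TensorProduct.assoc R S D S).toLinearMap

theorem coringRightAct_comp_lTensor (ψ : D ⊗[R] S →ₗ[R] S ⊗[R] D) (f : D →ₗ[R] S) :
    coringRightAct ψ ∘ₗ f.lTensor (S ⊗[R] D) =
      smulTensor R S (S ⊗[R] D) ∘ₗ (ψ ∘ₗ f.lTensor D).lTensor S ∘ₗ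
        (TensorProduct.assoc R S D D).toLinearMap := by
  ext s d d'
  simp [coringRightAct]

end CoringRightAct

section NormalBasis

variable {R S D : Type*} [CommSemiring R] [Semiring S] [Algebra R S] [AddCommMonoid D] [Module R D]

/-- The left multiplication map `B ⊗ D → S`, `b ⊗ d ↦ b μ(d)`, spanned by `μ : D → S` over a
subalgebra `B`. -/
noncomputable def normalBasisMap (B : Subalgebra R S) (μ : D →ₗ[R] S) : B ⊗[R] D →ₗ[R] S :=
  LinearMap.mul' R S ∘ₗ TensorProduct.map B.val.toLinearMap μ

variable {B : Subalgebra R S} {μ : D →ₗ[R] S}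

@[simp]
theorem normalBasisMap_tmul (b : B) (d : D) : normalBasisMap B μ (b ⊗ₜ d) = b * μ d := rfl

theorem normalBasisMap_rTensor_mulLeft (b : B) (x : B ⊗[R] D) :
    normalBasisMap B μ (LinearMap.rTensor D (LinearMap.mulLeft R b) x) =
      b * normalBasisMap B μ x := by
  induction x with
  | zero => simp
  | add x y hx hy => simp only [map_add, hx, hy, mul_add]
  | tmul b' d => simp [mul_assoc]

theorem eq_normalBasisMap {θ : B ⊗[R] D →ₗ[R] S}
    (hθ : ∀ (b : B) (x : B ⊗[R] D),
      θ (LinearMap.rTensor D (LinearMap.mulLeft R b) x) = b * θ x) :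
    θ = normalBasisMap B (θ ∘ₗ TensorProduct.mk R B D 1) := by
  ext b d
  simpa using hθ b (1 ⊗ₜ d)

theorem rTensor_normalBasisMap_assoc_symm (b : B) (t : D ⊗[R] D) :
    LinearMap.rTensor D (normalBasisMap B μ) ((TensorProduct.assoc R B D D).symm (b ⊗ₜ t)) =
      (b : S) • μ.rTensor D t := by
  induction t with
  | zero => simp
  | add t t' ht ht' => simp only [TensorProduct.tmul_add, map_add, smul_add, ht, ht']
  | tmul d d' => simp [TensorProduct.smul_tmul']

variable [Coalgebra R D]

/-- The right normal basis property for a coaction `ρ` and a subalgebra `B`: `S` is isomorphic to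
`B ⊗ D` as a left `B`-module and right `D`-comodule. -/
def HasNormalBasis (ρ : S →ₗ[R] S ⊗[R] D) (B : Subalgebra R S) : Prop :=
  ∃ θ : B ⊗[R] D →ₗ[R] S,
    Function.Bijective θ ∧
    (∀ (b : B) (x : B ⊗[R] D), θ (LinearMap.rTensor D (LinearMap.mulLeft R b) x) = b * θ x) ∧
    (∀ x : B ⊗[R] D, ρ (θ x) = LinearMap.rTensor D θ
      ((TensorProduct.assoc R B D D).symm (LinearMap.lTensor _ comul x)))

/-- A normal basis presented by a `D`-colinear `μ : D → S` and a left `B`-linear `p : S → B`: the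
map `b ⊗ d ↦ b μ(d)` is then bijective with inverse `a ↦ p(a₀) ⊗ a₁`. The projection `p` is kept
`S`-valued, so that it can be compared with the values of `*can`. -/
structure IsNormalBasisPair (ρ : S →ₗ[R] S ⊗[R] D) (B : Subalgebra R S)
    (μ : D →ₗ[R] S) (p : S →ₗ[R] S) : Prop where
  colinear : ρ ∘ₗ μ = μ.rTensor D ∘ₗ comul
  mem : ∀ a, p a ∈ B
  map_mul : ∀ b ∈ B, ∀ a, p (b * a) = b * p a
  comp_eq_unit : p ∘ₗ μ = Algebra.linearMap R S ∘ₗ counit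
  comoduleConv_eq_id : p ⋆[ρ] μ = LinearMap.id

variable {ρ : S →ₗ[R] S ⊗[R] D} {p : S →ₗ[R] S}

theorem normalBasisMap_colinear_iff (hρ : ∀ b ∈ B, ∀ a, ρ (b * a) = b • ρ a) :
    (∀ x : B ⊗[R] D, ρ (normalBasisMap B μ x) = LinearMap.rTensor D (normalBasisMap B μ)
      ((TensorProduct.assoc R B D D).symm (LinearMap.lTensor _ comul x))) ↔
    ρ ∘ₗ μ = μ.rTensor D ∘ₗ comul := by
  constructor
  · intro h
    ext d
    simpa [rTensor_normalBasisMap_assoc_symm] using h (1 ⊗ₜ d)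
  · intro h x
    induction x with
    | zero => simp
    | add x y hx hy => simp only [map_add, hx, hy]
    | tmul b d =>
      rw [normalBasisMap_tmul, hρ b b.2, LinearMap.lTensor_tmul,
        rTensor_normalBasisMap_assoc_symm]
      exact congrArg ((b : S) • ·) (LinearMap.congr_fun h d)

theorem hasNormalBasis_iff_exists_bijective (hρ : ∀ b ∈ B, ∀ a, ρ (b * a) = b • ρ a) :
    HasNormalBasis ρ B ↔ ∃ μ : D →ₗ[R] S, ρ ∘ₗ μ = μ.rTensor D ∘ₗ comul ∧
      Function.Bijective (normalBasisMap B μ) := by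
  constructor
  · rintro ⟨θ, hbij, hlin, hcol⟩
    rw [eq_normalBasisMap hlin] at hbij hcol
    exact ⟨_, (normalBasisMap_colinear_iff hρ).1 hcol, hbij⟩
  · rintro ⟨μ, hμ, hbij⟩
    exact ⟨normalBasisMap B μ, hbij, normalBasisMap_rTensor_mulLeft,
      (normalBasisMap_colinear_iff hρ).2 hμ⟩

theorem IsNormalBasisPair.bijective (hρ : ∀ b ∈ B, ∀ a, ρ (b * a) = b • ρ a)
    (h : IsNormalBasisPair ρ B μ p) : Function.Bijective (normalBasisMap B μ) := by
  let q : S →ₗ[R] B := p.codRestrict (Subalgebra.toSubmodule B) h.mem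
  have hq_coe : ∀ a, (q a : S) = p a := fun _ ↦ rfl
  have hq : ∀ (b : B) d, q (b * μ d) = counit (R := R) d • b := fun b d ↦ by
    have hpμ : p (μ d) = algebraMap R S (counit d) :=
      LinearMap.congr_fun h.comp_eq_unit d
    ext
    simp [hq_coe, h.map_mul b b.2, hpμ, Algebra.algebraMap_eq_smul_one]
  have hqμ : ∀ (b : B) (t : D ⊗[R] D), q.rTensor D ((b : S) • μ.rTensor D t) =
      b ⊗ₜ TensorProduct.lid R D (counit.rTensor D t) := fun b t ↦ by
    induction t with
    | zero => simp
    | add t t' ht ht' => simp only [map_add, smul_add, ht, ht', TensorProduct.tmul_add]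
    | tmul d d' => simp [TensorProduct.smul_tmul', hq]
  have hleft : Function.LeftInverse (q.rTensor D ∘ₗ ρ) (normalBasisMap B μ) := fun x ↦ by
    induction x with
    | zero => simp
    | add x y hx hy => rw [map_add, map_add, hx, hy]
    | tmul b d =>
      have hμ : ρ (μ d) = μ.rTensor D (comul d) := LinearMap.congr_fun h.colinear d
      simp [hρ b b.2, hμ, hqμ]
  have hright : normalBasisMap B μ ∘ₗ q.rTensor D ∘ₗ ρ = LinearMap.id := by
    rw [← h.comoduleConv_eq_id, comoduleConv, ← LinearMap.comp_assoc, ← LinearMap.comp_assoc]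
    congr 1
    ext a d
    simp [hq_coe]
  exact ⟨hleft.injective, Function.RightInverse.surjective (LinearMap.congr_fun hright)⟩

theorem exists_isNormalBasisPair (hρ : ∀ b ∈ B, ∀ a, ρ (b * a) = b • ρ a)
    (hμ : ρ ∘ₗ μ = μ.rTensor D ∘ₗ comul) (hbij : Function.Bijective (normalBasisMap B μ)) :
    ∃ p, IsNormalBasisPair ρ B μ p := by
  let e : B ⊗[R] D ≃ₗ[R] S := LinearEquiv.ofBijective _ hbij
  let q : S →ₗ[R] B := (TensorProduct.rid R B).toLinearMap ∘ₗ counit.lTensor B ∘ₗ e.symm.toLinearMap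
  let p : S →ₗ[R] S := B.val.toLinearMap ∘ₗ q
  have hp : ∀ (b : B) d, p (b * μ d) = counit (R := R) d • (b : S) := fun b d ↦ by
    have he : e.symm (b * μ d) = b ⊗ₜ d := e.symm_apply_apply (b ⊗ₜ d)
    simp [p, q, he]
  have hp_mul : ∀ b ∈ B, ∀ a, p (b * a) = b * p a := fun b hb a ↦ by
    obtain ⟨x, rfl⟩ := hbij.2 a
    induction x with
    | zero => simp
    | add x y hx hy => simp only [map_add, mul_add, hx, hy]
    | tmul b' d => simpa [mul_assoc, hp] using hp (⟨b, hb⟩ * b') d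
  have hpμ : p ∘ₗ μ = Algebra.linearMap R S ∘ₗ counit := by
    ext d
    simpa [Algebra.algebraMap_eq_smul_one] using hp 1 d
  refine ⟨p, hμ, fun a ↦ (q a).2, hp_mul, hpμ, ?_⟩
  have hconv : (p ⋆[ρ] μ) ∘ₗ μ = μ := by
    rw [comoduleConv_comp hμ, hpμ, unit_comoduleConv]
  ext a
  obtain ⟨x, rfl⟩ := hbij.2 a
  induction x with
  | zero => simp
  | add x y hx hy => simp only [map_add, hx, hy]
  | tmul b d =>
    calc (p ⋆[ρ] μ) (b * μ d)
        = b * (p ⋆[ρ] μ) (μ d) := comoduleConv_smul (hρ b b.2) (hp_mul b b.2) μ (μ d)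
      _ = b * μ d := congrArg ((b : S) * ·) (LinearMap.congr_fun hconv d)

theorem hasNormalBasis_iff_exists_isNormalBasisPair (hρ : ∀ b ∈ B, ∀ a, ρ (b * a) = b • ρ a) :
    HasNormalBasis ρ B ↔ ∃ μ p, IsNormalBasisPair ρ B μ p := by
  rw [hasNormalBasis_iff_exists_bijective hρ]
  exact ⟨fun ⟨μ, hμ, hbij⟩ ↦ ⟨μ, exists_isNormalBasisPair hρ hμ hbij⟩,
    fun ⟨μ, _, h⟩ ↦ ⟨μ, h.colinear, h.bijective hρ⟩⟩

end NormalBasis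

section EntwiningStructure

variable {k A C}

/-- The coaction `a ↦ ψ(g ⊗ a)` of `C` on `A` defined by an element `g`. -/
noncomputable def coaction (ψ : C ⊗[k] A →ₗ[k] A ⊗[k] C) (g : C) : A →ₗ[k] A ⊗[k] C :=
  ψ ∘ₗ TensorProduct.mk k C A g

/-- The map `c ↦ ψ(c₁ ⊗ f(c₂))` whose equality with `c ↦ f(c) ⊗ g` defines `f ∈ Q`. -/
noncomputable def entwineComul (ψ : C ⊗[k] A →ₗ[k] A ⊗[k] C) (f : C →ₗ[k] A) :
    C →ₗ[k] A ⊗[k] C :=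
  ψ ∘ₗ f.lTensor C ∘ₗ comul

variable {ψ : C ⊗[k] A →ₗ[k] A ⊗[k] C} {g : C}

theorem conv_eq_comoduleConv (f h : C →ₗ[k] A) : conv k A C f h = f ⋆[comul] h := rfl

theorem memQ_iff_entwineComul_eq {q : C →ₗ[k] A} :
    MemQ k A C ψ g q ↔ entwineComul ψ q = (TensorProduct.mk k A C).flip g ∘ₗ q :=
  ⟨fun h ↦ LinearMap.ext h, fun h ↦ LinearMap.congr_fun h⟩

theorem entwine_comp_lTensor_mul' (hψ : IsEntwining k A C ψ) :
    ψ ∘ₗ (LinearMap.mul' k A).lTensor C ∘ₗ (TensorProduct.assoc k C A A).toLinearMap =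
      coringRightAct ψ ∘ₗ ψ.rTensor A := by
  have hright : ∀ b, entwineRight k A C ψ b =
      coringRightAct ψ ∘ₗ (TensorProduct.mk k (A ⊗[k] C) A).flip b := fun b ↦ by
    rw [entwineRight, ← LinearMap.comp_assoc, ← smulTensor_tensorProduct]
    ext a c
    simp [coringRightAct]
  ext c a b
  simp [hψ.1, hright]

theorem coaction_coassoc (hψ : IsEntwining k A C ψ) (hg : IsGrouplikeElem k C g) :
    (TensorProduct.assoc k A C C).toLinearMap ∘ₗ (coaction ψ g).rTensor C ∘ₗ coaction ψ g =
      comul.lTensor A ∘ₗ coaction ψ g := by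
  have hrTensor : (coaction ψ g).rTensor C =
      ψ.rTensor C ∘ₗ (TensorProduct.assoc k C A C).symm.toLinearMap ∘ₗ
        TensorProduct.mk k C (A ⊗[k] C) g := by
    ext a c
    simp [coaction]
  ext a
  have hcomul := hψ.2.2.1 g a
  rw [hg.1] at hcomul
  rw [hrTensor]
  simp [coaction, hcomul, entwineTwice]

theorem coaction_counit (hψ : IsEntwining k A C ψ) (hg : IsGrouplikeElem k C g) :
    (TensorProduct.rid k A).toLinearMap ∘ₗ counit.lTensor A ∘ₗ coaction ψ g = LinearMap.id := by
  ext a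
  simpa [coaction, hg.2] using hψ.2.2.2 g a

theorem coaction_mul_of_mem {hψ : IsEntwining k A C ψ} :
    ∀ b ∈ coinvAlgebra k A C ψ hψ g, ∀ a, coaction ψ g (b * a) = b • coaction ψ g a := by
  intro b (hb : ψ (g ⊗ₜ b) = b ⊗ₜ g) a
  simpa [coaction, coringRightAct, hb]
    using LinearMap.congr_fun (entwine_comp_lTensor_mul' hψ) (g ⊗ₜ b ⊗ₜ a)

theorem coaction_comp_canStar (hψ : IsEntwining k A C ψ) (hg : IsGrouplikeElem k C g)
    (f : C →ₗ[k] A) :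
    coaction ψ g ∘ₗ canStar k A C ψ g f = LinearMap.id ⋆[coaction ψ g] (entwineComul ψ f) := by
  have hmul : coaction ψ g ∘ₗ LinearMap.mul' k A ∘ₗ f.lTensor A =
      (coringRightAct ψ ∘ₗ f.lTensor (A ⊗[k] C)) ∘ₗ (coaction ψ g).rTensor C := by
    ext a c
    simpa [coaction] using LinearMap.congr_fun (entwine_comp_lTensor_mul' hψ) (g ⊗ₜ a ⊗ₜ f c)
  calc coaction ψ g ∘ₗ canStar k A C ψ g f
      = (coringRightAct ψ ∘ₗ f.lTensor (A ⊗[k] C)) ∘ₗ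
          (coaction ψ g).rTensor C ∘ₗ coaction ψ g := congrArg (· ∘ₗ coaction ψ g) hmul
    _ = smulTensor k A (A ⊗[k] C) ∘ₗ (ψ ∘ₗ f.lTensor C).lTensor A ∘ₗ
          comul.lTensor A ∘ₗ coaction ψ g := by
        rw [coringRightAct_comp_lTensor, ← coaction_coassoc hψ hg]; rfl
    _ = LinearMap.id ⋆[coaction ψ g] (entwineComul ψ f) := by
        rw [← LinearMap.comp_assoc _ _ (LinearMap.lTensor A _), ← LinearMap.lTensor_comp]; rfl

theorem entwineComul_convUnit (hψ : IsEntwining k A C ψ) :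
    entwineComul ψ (convUnit k A C) = TensorProduct.mk k A C 1 := by
  have hmap : ψ ∘ₗ (convUnit k A C).lTensor C =
      TensorProduct.mk k A C 1 ∘ₗ (TensorProduct.rid k C).toLinearMap ∘ₗ counit.lTensor C := by
    ext c d
    simp [convUnit, Algebra.algebraMap_eq_smul_one, hψ.2.1]
  ext c
  simpa [entwineComul] using LinearMap.congr_fun hmap (comul c)

theorem entwineComul_conv (hψ : IsEntwining k A C ψ) (f h : C →ₗ[k] A) :
    entwineComul ψ (conv k A C f h) =
      coringRightAct ψ ∘ₗ TensorProduct.map (entwineComul ψ f) h ∘ₗ comul := by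
  have hmul : ψ ∘ₗ (LinearMap.mul' k A ∘ₗ TensorProduct.map f h).lTensor C ∘ₗ
      (TensorProduct.assoc k C C C).toLinearMap =
        coringRightAct ψ ∘ₗ TensorProduct.map (ψ ∘ₗ f.lTensor C) h := by
    ext c c' c''
    simpa using LinearMap.congr_fun (entwine_comp_lTensor_mul' hψ) (c ⊗ₜ f c' ⊗ₜ h c'')
  calc entwineComul ψ (conv k A C f h)
      = ψ ∘ₗ (LinearMap.mul' k A ∘ₗ TensorProduct.map f h).lTensor C ∘ₗ
          comul.lTensor C ∘ₗ comul := by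
        rw [← LinearMap.comp_assoc _ _ (LinearMap.lTensor C _), ← LinearMap.lTensor_comp]; rfl
    _ = (coringRightAct ψ ∘ₗ TensorProduct.map (ψ ∘ₗ f.lTensor C) h) ∘ₗ
          comul.rTensor C ∘ₗ comul := by
        rw [← Coalgebra.coassoc, ← hmul]; rfl
    _ = coringRightAct ψ ∘ₗ TensorProduct.map (entwineComul ψ f) h ∘ₗ comul := by
        rw [LinearMap.comp_assoc, ← LinearMap.comp_assoc _ _ (TensorProduct.map _ h),
          LinearMap.map_comp_rTensor]; rfl

theorem entwineComul_conv_of_memQ (hψ : IsEntwining k A C ψ) {l : C →ₗ[k] A}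
    (hl : MemQ k A C ψ g l) (h : C →ₗ[k] A) :
    entwineComul ψ (conv k A C l h) = l ⋆[comul] (coaction ψ g ∘ₗ h) := by
  have hmap : coringRightAct ψ ∘ₗ TensorProduct.map ((TensorProduct.mk k A C).flip g ∘ₗ l) h =
      smulTensor k A (A ⊗[k] C) ∘ₗ TensorProduct.map l (coaction ψ g ∘ₗ h) := by
    ext c c'
    simp [coringRightAct, coaction]
  rw [entwineComul_conv hψ, memQ_iff_entwineComul_eq.1 hl, ← LinearMap.comp_assoc, hmap]
  rfl

end EntwiningStructure

section Cleaving

variable {k A C} {ψ : C ⊗[k] A →ₗ[k] A ⊗[k] C} {g : C} {l m : C →ₗ[k] A}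

theorem colinear_of_conv_inverse (hψ : IsEntwining k A C ψ) (hl : MemQ k A C ψ g l)
    (hlm : conv k A C l m = convUnit k A C) (hml : conv k A C m l = convUnit k A C) :
    coaction ψ g ∘ₗ m = m.rTensor C ∘ₗ comul :=
  calc coaction ψ g ∘ₗ m
      = (m ⋆[comul] l) ⋆[comul] (coaction ψ g ∘ₗ m) := by
        rw [← conv_eq_comoduleConv, hml, convUnit, unit_comoduleConv]
    _ = m ⋆[comul] (l ⋆[comul] (coaction ψ g ∘ₗ m)) := comul_comoduleConv_assoc ..
    _ = m ⋆[comul] (TensorProduct.mk k A C 1) := by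
        rw [← entwineComul_conv_of_memQ hψ hl, hlm, entwineComul_convUnit hψ]
    _ = m.rTensor C ∘ₗ comul := comoduleConv_mk_one comul m

theorem canStar_mul_of_mem {hψ : IsEntwining k A C ψ} (f : C →ₗ[k] A) :
    ∀ b ∈ coinvAlgebra k A C ψ hψ g, ∀ a,
      canStar k A C ψ g f (b * a) = b * canStar k A C ψ g f a := fun b hb a ↦
  comoduleConv_smul (coaction_mul_of_mem b hb) (fun _ ↦ rfl) f a

theorem canStar_mem_of_memQ (hψ : IsEntwining k A C ψ) (hg : IsGrouplikeElem k C g)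
    (hl : MemQ k A C ψ g l) (a : A) : canStar k A C ψ g l a ∈ coinvAlgebra k A C ψ hψ g := by
  have h : coaction ψ g ∘ₗ canStar k A C ψ g l =
      (TensorProduct.mk k A C).flip g ∘ₗ canStar k A C ψ g l := by
    rw [coaction_comp_canStar hψ hg, memQ_iff_entwineComul_eq.1 hl, comoduleConv_flip_mk]
    rfl
  exact LinearMap.congr_fun h a

theorem canStar_comp_of_colinear (hm : coaction ψ g ∘ₗ m = m.rTensor C ∘ₗ comul)
    (f : C →ₗ[k] A) : canStar k A C ψ g f ∘ₗ m = conv k A C m f :=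
  comoduleConv_comp hm LinearMap.id f

theorem canStar_comoduleConv (hψ : IsEntwining k A C ψ) (hg : IsGrouplikeElem k C g)
    (f h : C →ₗ[k] A) :
    canStar k A C ψ g f ⋆[coaction ψ g] h = canStar k A C ψ g (conv k A C f h) :=
  comoduleConv_assoc (coaction_coassoc hψ hg) LinearMap.id f h

theorem canStar_convUnit (hψ : IsEntwining k A C ψ) (hg : IsGrouplikeElem k C g) :
    canStar k A C ψ g (convUnit k A C) = LinearMap.id :=
  comoduleConv_unit (coaction_counit hψ hg) LinearMap.id

theorem isNormalBasisPair_of_memQ (hψ : IsEntwining k A C ψ) (hg : IsGrouplikeElem k C g)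
    (hl : MemQ k A C ψ g l) (hlm : conv k A C l m = convUnit k A C)
    (hml : conv k A C m l = convUnit k A C) :
    IsNormalBasisPair (coaction ψ g) (coinvAlgebra k A C ψ hψ g) m (canStar k A C ψ g l) where
  colinear := colinear_of_conv_inverse hψ hl hlm hml
  mem := canStar_mem_of_memQ hψ hg hl
  map_mul := canStar_mul_of_mem l
  comp_eq_unit := (canStar_comp_of_colinear (colinear_of_conv_inverse hψ hl hlm hml) l).trans hml
  comoduleConv_eq_id := by rw [canStar_comoduleConv hψ hg, hlm, canStar_convUnit hψ hg]

theorem IsNormalBasisPair.memQ {hψ : IsEntwining k A C ψ} (hg : IsGrouplikeElem k C g)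
    (h : IsNormalBasisPair (coaction ψ g) (coinvAlgebra k A C ψ hψ g) m (canStar k A C ψ g l))
    (hlm : conv k A C l m = convUnit k A C) : MemQ k A C ψ g l := by
  have hcoinv : coaction ψ g ∘ₗ canStar k A C ψ g l =
      (TensorProduct.mk k A C).flip g ∘ₗ canStar k A C ψ g l := LinearMap.ext h.mem
  refine memQ_iff_entwineComul_eq.2 (comoduleConv_injective hlm ?_)
  calc m ⋆[comul] (entwineComul ψ l)
      = (LinearMap.id ⋆[coaction ψ g] (entwineComul ψ l)) ∘ₗ m :=
        (comoduleConv_comp h.colinear LinearMap.id _).symm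
    _ = ((TensorProduct.mk k A C).flip g ∘ₗ canStar k A C ψ g l) ∘ₗ m := by
        rw [← coaction_comp_canStar hψ hg, hcoinv]
    _ = (TensorProduct.mk k A C).flip g ∘ₗ (m ⋆[comul] l) := by
        rw [LinearMap.comp_assoc, canStar_comp_of_colinear h.colinear, conv_eq_comoduleConv]
    _ = m ⋆[comul] ((TensorProduct.mk k A C).flip g ∘ₗ l) :=
        (comoduleConv_flip_mk comul m g l).symm

theorem IsNormalBasisPair.conv_eq_convUnit {hψ : IsEntwining k A C ψ}
    (hg : IsGrouplikeElem k C g) (hinj : Function.Injective (canStar k A C ψ g))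
    (h : IsNormalBasisPair (coaction ψ g) (coinvAlgebra k A C ψ hψ g) m (canStar k A C ψ g l)) :
    conv k A C l m = convUnit k A C :=
  hinj <| by rw [← canStar_comoduleConv hψ hg, h.comoduleConv_eq_id, canStar_convUnit hψ hg]

theorem canStar_injective (hm : coaction ψ g ∘ₗ m = m.rTensor C ∘ₗ comul)
    (hlm : conv k A C l m = convUnit k A C) : Function.Injective (canStar k A C ψ g) :=
  fun f f' hff' ↦ comoduleConv_injective hlm <| by
    rw [← conv_eq_comoduleConv, ← conv_eq_comoduleConv, ← canStar_comp_of_colinear hm, hff',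
      canStar_comp_of_colinear hm]

theorem IsNormalBasisPair.range_canStar {hψ : IsEntwining k A C ψ} (hg : IsGrouplikeElem k C g)
    (h : IsNormalBasisPair (coaction ψ g) (coinvAlgebra k A C ψ hψ g) m (canStar k A C ψ g l)) :
    Set.range (canStar k A C ψ g) =
      {φ | ∀ b ∈ coinvAlgebra k A C ψ hψ g, ∀ a, φ (b * a) = b * φ a} := by
  refine (Set.range_subset_iff.2 canStar_mul_of_mem).antisymm fun φ hφ ↦
    ⟨conv k A C l (φ ∘ₗ m), ?_⟩
  calc canStar k A C ψ g (conv k A C l (φ ∘ₗ m))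
      = canStar k A C ψ g l ⋆[coaction ψ g] (φ ∘ₗ m) := (canStar_comoduleConv hψ hg ..).symm
    _ = φ ∘ₗ (canStar k A C ψ g l ⋆[coaction ψ g] m) :=
        (comp_comoduleConv _ (fun a ↦ hφ _ (h.mem a)) m).symm
    _ = φ := by rw [h.comoduleConv_eq_id, LinearMap.comp_id]

end Cleaving

/-- `(A, C, ψ, g)` is cleft iff `*can` is a bijection of `Hom_k(C, A)` onto the left
`B`-linear endomorphisms of `A`, and `(A, C, ψ, g)` has the right normal basis property,
i.e. there is a left `B`-linear right `C`-colinear bijection `B ⊗_k C → A`,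
where `B = A^{co C}`. -/
theorem cleft_iff_canStar_bijective_and_normalBasis
    (ψ : C ⊗[k] A →ₗ[k] A ⊗[k] C) (hψ : IsEntwining k A C ψ)
    (g : C) (hg : IsGrouplikeElem k C g) :
    (∃ lam lamInv : C →ₗ[k] A, MemQ k A C ψ g lam ∧
        conv k A C lam lamInv = convUnit k A C ∧
        conv k A C lamInv lam = convUnit k A C) ↔
    ((Function.Injective (canStar k A C ψ g) ∧
        Set.range (canStar k A C ψ g) =
          {φ : A →ₗ[k] A | ∀ b ∈ coinvAlgebra k A C ψ hψ g, ∀ a : A,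
            φ (b * a) = b * φ a}) ∧
     (∃ θ : (coinvAlgebra k A C ψ hψ g) ⊗[k] C →ₗ[k] A,
        Function.Bijective θ ∧
        (∀ (b : coinvAlgebra k A C ψ hψ g) (x : (coinvAlgebra k A C ψ hψ g) ⊗[k] C),
          θ (LinearMap.rTensor C (LinearMap.mulLeft k b) x) = (b : A) * θ x) ∧
        (∀ x : (coinvAlgebra k A C ψ hψ g) ⊗[k] C,
          ψ (g ⊗ₜ[k] θ x) =
            LinearMap.rTensor C θ
              ((TensorProduct.assoc k (coinvAlgebra k A C ψ hψ g) C C).symm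
                (LinearMap.lTensor _ (comul (R := k)) x))))) := by
  constructor
  · rintro ⟨l, m, hl, hlm, hml⟩
    have hpair := isNormalBasisPair_of_memQ hψ hg hl hlm hml
    exact ⟨⟨canStar_injective hpair.colinear hlm, hpair.range_canStar hg⟩,
      (hasNormalBasis_iff_exists_isNormalBasisPair coaction_mul_of_mem).2 ⟨m, _, hpair⟩⟩
  · rintro ⟨⟨hinj, hrange⟩, hbasis⟩
    obtain ⟨m, p, hpair⟩ :=
      (hasNormalBasis_iff_exists_isNormalBasisPair (coaction_mul_of_mem (hψ := hψ))).1 hbasis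
    obtain ⟨l, rfl⟩ : p ∈ Set.range (canStar k A C ψ g) := hrange ▸ hpair.map_mul
    have hlm := hpair.conv_eq_convUnit hg hinj
    exact ⟨l, m, hpair.memQ hg hlm, hlm,
      (canStar_comp_of_colinear hpair.colinear l).symm.trans hpair.comp_eq_unit⟩

end Cleft2
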